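/- Localization bounds for the fixed point (second part of Theorem 2.3): Set γ := ‖Q‖_{(d+1)/2,ℤ^k} and δ := ‖Q‖_{d+1,ℤ^k∖{0}}, and suppose (γ, δ) ∈ G_d. Then the equation ε = γ ε^d + δ has a smallest positive solution ε* = ε*(γ,δ), it satisfies γ (ε*)^{d−1} < 1, and the fixed point x of T from the good-set regime (the unique fixed point in the ε-ball for a good-set witness ε) satisfies (δ (1 − δ (ε*)^d)/(1 + γ (ε*)^{d−1}))^{d+1} ≤ ‖x‖_{d+1,ℤ^k∖{0}}^{d+1} ≤ (δ (1 + δ (ε*)^d)/(1 − γ (ε*)^{d−1}))^{d+1}. (The quantity ‖x‖_{d+1,ℤ^k∖{0}}^{d+1} equals the ratio μ_0(σ_0 ≠ 0)/μ_0(σ_0 = 0) of the associated Gibbs measure.) -/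

import Mathlib

/-!
Let `X = ‖x‖_{d+1}` for a fixed point `x` of `T`, and write `A = ∑_{j≠0} Q(j) x(j)^d`, so that
`x(i) (1 + A) = Q(i) + (Q * x^d)(i)` for `i ≠ 0`, with `A ≥ 0` and `Q * x^d ≥ 0`.

* Hölder's inequality gives `A ≤ δ X^d`, and `x(i) (1 + A) ≥ Q(i)` gives `δ ≤ (1 + A) X`. Hence
  `δ ≤ (1 + δ X^d) X` (`del_le_of_fixed`).
* Young's convolution inequality `‖Q * x^d‖_{d+1} ≤ ‖Q‖_{(d+1)/2} ‖x‖_{d+1}^d`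
  (`eN_conv_le`, proved from a three-fold Hölder inequality) and Minkowski's inequality
  give `X ≤ δ + γ X^d` (`norm0_le_of_fixed`).

For a good-set witness `ε` the function `e ↦ e - γ e^d` is strictly increasing on `[0, ε]`
(`strict_of_witness`), because `d γ ε^{d-1} < 1`. It follows that the equation
`ε* = γ (ε*)^d + δ` has exactly one solution in `(0, ε]`, which is the smallest positive one, and
that `X ≤ δ + γ X^d` with `X ≤ ε` forces `X ≤ ε*`. Since `ε* = δ / (1 - γ (ε*)^{d-1})`, the upper
bound follows; the lower bound follows from `X ≥ δ / (1 + δ X^d) ≥ δ (1 - δ (ε*)^d)`.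

The summations are carried out in `ℝ≥0∞`, where no summability questions arise.
-/

open scoped BigOperators
open Filter Topology

noncomputable section

/-- The integer lattice `ℤ^k`. -/
abbrev ZkL (k : ℕ) := Fin k → ℤ

/-- The punctured integer lattice `ℤ^k ∖ {0}`, as a subtype. -/
abbrev ZkP (k : ℕ) := {j : ZkL k // j ≠ 0}

/-- The `p`-norm `‖x‖_{p, ℤ^k}` of a function on all of `ℤ^k`. -/
noncomputable def normFull (k : ℕ) (p : ℝ) (x : ZkL k → ℝ) : ℝ :=
  (∑' j : ZkL k, |x j| ^ p) ^ (1 / p)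

/-- The `p`-norm `‖x‖_{p, ℤ^k ∖ {0}}` of a function on `ℤ^k`, restricted to nonzero sites. -/
noncomputable def normPunct (k : ℕ) (p : ℝ) (x : ZkL k → ℝ) : ℝ :=
  (∑' j : ZkP k, |x j.1| ^ p) ^ (1 / p)

/-- The `p`-norm of a function defined on `ℤ^k ∖ {0}`. -/
noncomputable def norm0 (k : ℕ) (p : ℝ) (x : ZkP k → ℝ) : ℝ :=
  (∑' j : ZkP k, |x j| ^ p) ^ (1 / p)

/-- `γ := ‖Q‖_{(d+1)/2, ℤ^k}`. -/
noncomputable def gam (k d : ℕ) (Q : ZkL k → ℝ) : ℝ := normFull k (((d : ℝ) + 1) / 2) Q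

/-- `δ := ‖Q‖_{d+1, ℤ^k ∖ {0}}`. -/
noncomputable def del (k d : ℕ) (Q : ZkL k → ℝ) : ℝ := normPunct k ((d : ℝ) + 1) Q

/-- Membership in `D`: an element of `ℓ^{d+1}(ℤ^k ∖ {0})` with nonnegative entries. -/
def memD (k d : ℕ) (x : ZkP k → ℝ) : Prop :=
  Summable (fun j : ZkP k => |x j| ^ ((d : ℝ) + 1)) ∧ ∀ j : ZkP k, 0 ≤ x j

/-- The operator `T`:
`T(x)(i) = (Q(i) + Σ_{j≠0} Q(i−j) x(j)^d) / (1 + Σ_{j≠0} Q(j) x(j)^d)`. -/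
noncomputable def opT (k d : ℕ) (Q : ZkL k → ℝ) (x : ZkP k → ℝ) (i : ZkL k) : ℝ :=
  (Q i + ∑' j : ZkP k, Q (i - j.1) * x j ^ d) /
  (1 + ∑' j : ZkP k, Q j.1 * x j ^ d)

/-- The good set `G_d`. -/
def goodSet (d : ℕ) : Set (ℝ × ℝ) :=
  {gd | 1 < gd.1 ∧ 0 < gd.2 ∧ ∃ ε > 0,
    gd.2 + gd.1 * ε ^ d ≤ ε ∧
    2 * d * gd.1 * ε ^ (d - 1) + 2 * d * gd.2 * ε ^ d < 1}

open scoped ENNReal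

/-! ### Inequalities of Hölder, Minkowski and Young in `ℝ≥0∞` -/

/-- The `ℓ^r` norm of an `ℝ≥0∞`-valued family over an arbitrary index type. -/
def eN {ι : Type*} (r : ℝ) (f : ι → ℝ≥0∞) : ℝ≥0∞ := (∑' j, f j ^ r) ^ (1 / r)

/-- Three-fold Hölder inequality for sums in `ℝ≥0∞`. -/
lemma tsum_holder3 {ι : Type*} (a b c : ι → ℝ≥0∞) {s t u : ℝ} (hs : 0 ≤ s) (ht : 0 ≤ t)
    (hu : 0 ≤ u) (h : s + t + u = 1) :
    ∑' j, a j ^ s * b j ^ t * c j ^ u ≤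
      (∑' j, a j) ^ s * (∑' j, b j) ^ t * (∑' j, c j) ^ u := by
  let _ : MeasurableSpace ι := ⊤
  have := ENNReal.lintegral_prod_norm_pow_le (μ := MeasureTheory.Measure.count)
    (Finset.univ : Finset (Fin 3)) (f := ![a, b, c]) (p := ![s, t, u])
    (fun i _ => (measurable_from_top).aemeasurable) (by simp [Fin.sum_univ_three, h])
    (by intro i _; fin_cases i <;> simp [hs, ht, hu])
  simpa [Fin.prod_univ_three, MeasureTheory.lintegral_count] using this

lemma eN_add_le {ι : Type*} (f g : ι → ℝ≥0∞) {r : ℝ} (hr : 1 ≤ r) :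
    eN r (fun j => f j + g j) ≤ eN r f + eN r g := by
  let _ : MeasurableSpace ι := ⊤
  have := ENNReal.lintegral_Lp_add_le (μ := MeasureTheory.Measure.count)
    (f := f) (g := g) (measurable_from_top).aemeasurable (measurable_from_top).aemeasurable hr
  simpa [MeasureTheory.lintegral_count, eN] using this

lemma eN_mono {ι : Type*} {f g : ι → ℝ≥0∞} {r : ℝ} (hr : 0 < r) (h : ∀ j, f j ≤ g j) :
    eN r f ≤ eN r g := by
  unfold eN
  gcongr with j
  exact h j

lemma eN_mul_left {ι : Type*} (c : ℝ≥0∞) (f : ι → ℝ≥0∞) {r : ℝ} (hr : 0 < r) :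
    eN r (fun j => c * f j) = c * eN r f := by
  unfold eN
  simp_rw [ENNReal.mul_rpow_of_nonneg _ _ hr.le]
  rw [ENNReal.tsum_mul_left, ENNReal.mul_rpow_of_nonneg _ _ (by positivity), ← ENNReal.rpow_mul,
    mul_one_div_cancel hr.ne', ENNReal.rpow_one]

/-- Hölder's inequality with exponents `d+1` and `(d+1)/d`. -/
lemma tsum_mul_pow_le {ι : Type*} (d : ℕ) (q x : ι → ℝ≥0∞) :
    ∑' j, q j * x j ^ d ≤ eN ((d : ℝ) + 1) q * eN ((d : ℝ) + 1) x ^ d := by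
  have hr : (0 : ℝ) < d + 1 := by positivity
  have h := tsum_holder3 (fun j => q j ^ ((d : ℝ) + 1)) (fun j => x j ^ ((d : ℝ) + 1))
    (fun _ => 1) (s := 1 / ((d : ℝ) + 1)) (t := d / ((d : ℝ) + 1)) (u := 0)
    (by positivity) (by positivity) le_rfl (by field_simp; ring)
  simp only [ENNReal.rpow_zero, mul_one, ← ENNReal.rpow_mul, mul_one_div_cancel hr.ne',
    ENNReal.rpow_one, mul_div_cancel₀ _ hr.ne', ENNReal.rpow_natCast] at h
  refine h.trans (le_of_eq ?_)
  unfold eN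
  rw [← ENNReal.rpow_natCast, ← ENNReal.rpow_mul]
  congr 2
  ring

/-- Young's convolution inequality with exponents `(d+1)/2`, `(d+1)/d` and `d+1`. -/
lemma eN_conv_le {k : ℕ} (d : ℕ) (hd : 1 ≤ d) (q : ZkL k → ℝ≥0∞) (x : ZkP k → ℝ≥0∞) :
    eN ((d : ℝ) + 1) (fun i : ZkP k => ∑' j : ZkP k, q (i.1 - j.1) * x j ^ d) ≤
      eN (((d : ℝ) + 1) / 2) q * eN ((d : ℝ) + 1) x ^ d := by
  have hd' : (1 : ℝ) ≤ d := by exact_mod_cast hd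
  set r : ℝ := (d : ℝ) + 1 with hrdef
  have hr : 0 < r := by positivity
  set Γ : ℝ≥0∞ := ∑' j : ZkL k, q j ^ (r / 2) with hΓ
  set Ξ : ℝ≥0∞ := ∑' j : ZkP k, x j ^ r with hΞ
  have hshift : ∀ i : ZkL k, ∑' j : ZkP k, q (i - j.1) ^ (r / 2) ≤ Γ := fun i =>
    ENNReal.tsum_comp_le_tsum_of_injective (f := fun j : ZkP k => i - j.1)
      (fun a b h => Subtype.ext (by simpa using h)) (fun j => q j ^ (r / 2))
  have hshift' : ∀ j : ZkL k, ∑' i : ZkP k, q (i.1 - j) ^ (r / 2) ≤ Γ := fun j =>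
    ENNReal.tsum_comp_le_tsum_of_injective (f := fun i : ZkP k => i.1 - j)
      (fun a b h => Subtype.ext (by simpa using h)) (fun j => q j ^ (r / 2))
  -- Hölder applied to `q * x^d = (q^{1/2} x) * q^{1/2} * x^{d-1}`.
  have hpt : ∀ i : ZkP k, (∑' j : ZkP k, q (i.1 - j.1) * x j ^ d) ^ r ≤
      (∑' j : ZkP k, q (i.1 - j.1) ^ (r / 2) * x j ^ r) * (Γ * Ξ ^ ((d : ℝ) - 1)) := by
    intro i
    have h := tsum_holder3 (fun j : ZkP k => q (i.1 - j.1) ^ (r / 2) * x j ^ r)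
      (fun j : ZkP k => q (i.1 - j.1) ^ (r / 2)) (fun j => x j ^ r)
      (s := 1 / r) (t := 1 / r) (u := ((d : ℝ) - 1) / r)
      (by positivity) (by positivity) (div_nonneg (by linarith) hr.le)
      (by rw [hrdef]; field_simp; ring)
    have hterm : ∀ j : ZkP k, (q (i.1 - j.1) ^ (r / 2) * x j ^ r) ^ (1 / r) *
        (q (i.1 - j.1) ^ (r / 2)) ^ (1 / r) * (x j ^ r) ^ (((d : ℝ) - 1) / r) =
        q (i.1 - j.1) * x j ^ d := by
      intro j
      rw [ENNReal.mul_rpow_of_nonneg _ _ (by positivity)]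
      simp only [← ENNReal.rpow_mul]
      rw [show r / 2 * (1 / r) = 1 / 2 by field_simp, mul_one_div_cancel hr.ne',
        mul_div_cancel₀ _ hr.ne', mul_assoc (_ * _), mul_mul_mul_comm,
        ← ENNReal.rpow_add_of_nonneg _ _ (by norm_num) (by norm_num),
        ← ENNReal.rpow_add_of_nonneg _ _ (by norm_num) (by linarith)]
      norm_num
    simp only [hterm] at h
    refine (ENNReal.rpow_le_rpow h hr.le).trans ?_
    rw [ENNReal.mul_rpow_of_nonneg _ _ hr.le, ENNReal.mul_rpow_of_nonneg _ _ hr.le]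
    simp only [← ENNReal.rpow_mul]
    rw [one_div_mul_cancel hr.ne', ENNReal.rpow_one, ENNReal.rpow_one,
      div_mul_cancel₀ _ hr.ne', mul_assoc]
    gcongr
    exact hshift i.1
  have hdouble : ∑' i : ZkP k, ∑' j : ZkP k, q (i.1 - j.1) ^ (r / 2) * x j ^ r ≤ Γ * Ξ := by
    rw [ENNReal.tsum_comm, hΞ, ← ENNReal.tsum_mul_left]
    refine ENNReal.tsum_le_tsum fun j => ?_
    rw [ENNReal.tsum_mul_right]
    gcongr
    exact hshift' j.1
  have hsum : ∑' i : ZkP k, (∑' j : ZkP k, q (i.1 - j.1) * x j ^ d) ^ r ≤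
      (Γ * Ξ) * (Γ * Ξ ^ ((d : ℝ) - 1)) := by
    refine (ENNReal.tsum_le_tsum hpt).trans ?_
    rw [ENNReal.tsum_mul_right]
    gcongr
  refine (ENNReal.rpow_le_rpow hsum (by positivity : 0 ≤ 1 / r)).trans (le_of_eq ?_)
  have e1 : (Γ * Ξ) * (Γ * Ξ ^ ((d : ℝ) - 1)) = Γ ^ (2 : ℝ) * Ξ ^ (d : ℝ) := by
    have hd1 : Ξ ^ (d : ℝ) = Ξ * Ξ ^ ((d : ℝ) - 1) := by
      conv_rhs => rw [← ENNReal.rpow_one Ξ, ← ENNReal.rpow_mul, one_mul,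
        ← ENNReal.rpow_add_of_nonneg _ _ zero_le_one (by linarith)]
      norm_num
    rw [hd1, ENNReal.rpow_two]
    ring
  rw [e1, ENNReal.mul_rpow_of_nonneg _ _ (by positivity), ← ENNReal.rpow_mul, ← ENNReal.rpow_mul]
  unfold eN
  rw [← ENNReal.rpow_natCast, ← ENNReal.rpow_mul]
  congr 2
  · field_simp
  · ring

/-! ### Estimates for fixed points of `T` -/

/-- Passage from real `ℓ^r` norms to `eN`. -/
lemma ofReal_norm_eq {ι : Type*} {r : ℝ} (hr : 0 < r) (f : ι → ℝ) (hf : ∀ j, 0 ≤ f j)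
    (hs : Summable fun j => |f j| ^ r) :
    ENNReal.ofReal ((∑' j, |f j| ^ r) ^ (1 / r)) = eN r (fun j => ENNReal.ofReal (f j)) := by
  unfold eN
  rw [← ENNReal.ofReal_rpow_of_nonneg (tsum_nonneg fun j => by positivity) (by positivity),
    ENNReal.ofReal_tsum_of_nonneg (fun j => by positivity) hs]
  congr 2
  ext j
  rw [abs_of_nonneg (hf j), ENNReal.ofReal_rpow_of_nonneg (hf j) hr.le]

/-- No summability is needed: the real sum is `0` when it does not converge. -/
lemma ofReal_tsum_le {ι : Type*} (f : ι → ℝ) (hf : ∀ j, 0 ≤ f j) :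
    ENNReal.ofReal (∑' j, f j) ≤ ∑' j, ENNReal.ofReal (f j) := by
  by_cases h : Summable f
  · exact (ENNReal.ofReal_tsum_of_nonneg hf h).le
  · simp [tsum_eq_zero_of_not_summable h]

section FixedPoint

variable {k d : ℕ} {Q : ZkL k → ℝ} {x : ZkP k → ℝ}

lemma gam_nonneg : 0 ≤ gam k d Q :=
  Real.rpow_nonneg (tsum_nonneg fun _ => by positivity) _

lemma del_nonneg : 0 ≤ del k d Q :=
  Real.rpow_nonneg (tsum_nonneg fun _ => by positivity) _

lemma norm0_nonneg {p : ℝ} : 0 ≤ norm0 k p x :=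
  Real.rpow_nonneg (tsum_nonneg fun _ => by positivity) _

lemma denominator_le (hQ : ∀ j, 0 < Q j)
    (hsum2 : Summable fun j : ZkP k => |Q j.1| ^ ((d : ℝ) + 1)) (hx : memD k d x) :
    ∑' j : ZkP k, Q j.1 * x j ^ d ≤ del k d Q * norm0 k ((d : ℝ) + 1) x ^ d := by
  have hr : (0 : ℝ) < d + 1 := by positivity
  rw [← ENNReal.ofReal_le_ofReal_iff (mul_nonneg del_nonneg (pow_nonneg norm0_nonneg _)),
    ENNReal.ofReal_mul del_nonneg, ENNReal.ofReal_pow norm0_nonneg]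
  unfold del norm0 normPunct
  rw [ofReal_norm_eq hr (fun j : ZkP k => Q j.1) (fun j => (hQ _).le) hsum2,
    ofReal_norm_eq hr x hx.2 hx.1]
  refine (ofReal_tsum_le _ fun j => mul_nonneg (hQ _).le (pow_nonneg (hx.2 j) _)).trans ?_
  simp_rw [ENNReal.ofReal_mul (hQ _).le, ENNReal.ofReal_pow (hx.2 _)]
  exact tsum_mul_pow_le d _ _

lemma fixed_eq (hQ : ∀ j, 0 < Q j) (hx : memD k d x)
    (hfix : ∀ i : ZkP k, opT k d Q x i.1 = x i) (i : ZkP k) :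
    (1 + ∑' j : ZkP k, Q j.1 * x j ^ d) * x i =
      Q i.1 + ∑' j : ZkP k, Q (i.1 - j.1) * x j ^ d := by
  have hA : 0 ≤ ∑' j : ZkP k, Q j.1 * x j ^ d :=
    tsum_nonneg fun j => mul_nonneg (hQ _).le (pow_nonneg (hx.2 j) _)
  have h := hfix i
  rw [opT, div_eq_iff (by linarith)] at h
  rw [h, mul_comm]

/-- Lower estimate: the convolution term of the fixed-point equation is dropped. -/
lemma del_le_of_fixed (hQ : ∀ j, 0 < Q j)
    (hsum2 : Summable fun j : ZkP k => |Q j.1| ^ ((d : ℝ) + 1)) (hx : memD k d x)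
    (hfix : ∀ i : ZkP k, opT k d Q x i.1 = x i) :
    del k d Q ≤
      (1 + del k d Q * norm0 k ((d : ℝ) + 1) x ^ d) * norm0 k ((d : ℝ) + 1) x := by
  have hr : (0 : ℝ) < d + 1 := by positivity
  have hA : 0 ≤ ∑' j : ZkP k, Q j.1 * x j ^ d :=
    tsum_nonneg fun j => mul_nonneg (hQ _).le (pow_nonneg (hx.2 j) _)
  have key : del k d Q ≤
      (1 + ∑' j : ZkP k, Q j.1 * x j ^ d) * norm0 k ((d : ℝ) + 1) x := by
    rw [← ENNReal.ofReal_le_ofReal_iff (mul_nonneg (by linarith) norm0_nonneg),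
      ENNReal.ofReal_mul (by linarith)]
    unfold del norm0 normPunct
    rw [ofReal_norm_eq hr (fun j : ZkP k => Q j.1) (fun j => (hQ _).le) hsum2,
      ofReal_norm_eq hr x hx.2 hx.1, ← eN_mul_left _ _ hr]
    refine eN_mono hr fun i => ?_
    rw [← ENNReal.ofReal_mul (by linarith), fixed_eq hQ hx hfix i]
    exact ENNReal.ofReal_le_ofReal (le_add_of_nonneg_right
      (tsum_nonneg fun j => mul_nonneg (hQ _).le (pow_nonneg (hx.2 j) _)))
  refine key.trans ?_
  gcongr
  · exact norm0_nonneg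
  · exact denominator_le hQ hsum2 hx

/-- Upper estimate: the denominator of `T` is at least `1`, and the numerator is bounded by the
inequalities of Minkowski and Young. -/
lemma norm0_le_of_fixed (hd : 1 ≤ d) (hQ : ∀ j, 0 < Q j)
    (hsum1 : Summable fun j : ZkL k => |Q j| ^ (((d : ℝ) + 1) / 2))
    (hsum2 : Summable fun j : ZkP k => |Q j.1| ^ ((d : ℝ) + 1)) (hx : memD k d x)
    (hfix : ∀ i : ZkP k, opT k d Q x i.1 = x i) :
    norm0 k ((d : ℝ) + 1) x ≤ del k d Q + gam k d Q * norm0 k ((d : ℝ) + 1) x ^ d := by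
  have hr : (0 : ℝ) < d + 1 := by positivity
  have hA : 0 ≤ ∑' j : ZkP k, Q j.1 * x j ^ d :=
    tsum_nonneg fun j => mul_nonneg (hQ _).le (pow_nonneg (hx.2 j) _)
  have hpow : 0 ≤ norm0 k ((d : ℝ) + 1) x ^ d := pow_nonneg norm0_nonneg _
  rw [← ENNReal.ofReal_le_ofReal_iff (add_nonneg del_nonneg (mul_nonneg gam_nonneg hpow)),
    ENNReal.ofReal_add del_nonneg (mul_nonneg gam_nonneg hpow),
    ENNReal.ofReal_mul gam_nonneg, ENNReal.ofReal_pow norm0_nonneg]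
  unfold del gam norm0 normPunct normFull
  rw [ofReal_norm_eq hr (fun j : ZkP k => Q j.1) (fun j => (hQ _).le) hsum2,
    ofReal_norm_eq hr x hx.2 hx.1,
    ofReal_norm_eq (half_pos hr) Q (fun j => (hQ _).le) hsum1]
  refine le_trans ?_ (add_le_add_right (eN_conv_le d hd _ _) _)
  refine le_trans ?_ (eN_add_le _ _ (by linarith [(Nat.cast_nonneg d : (0 : ℝ) ≤ d)]))
  refine eN_mono hr fun i => ?_
  have hC : 0 ≤ ∑' j : ZkP k, Q (i.1 - j.1) * x j ^ d :=
    tsum_nonneg fun j => mul_nonneg (hQ _).le (pow_nonneg (hx.2 j) _)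
  have h1 : x i ≤ Q i.1 + ∑' j : ZkP k, Q (i.1 - j.1) * x j ^ d := by
    rw [← fixed_eq hQ hx hfix i]
    nlinarith [mul_nonneg hA (hx.2 i)]
  refine (ENNReal.ofReal_le_ofReal h1).trans ?_
  rw [ENNReal.ofReal_add (hQ _).le hC]
  gcongr
  refine (ofReal_tsum_le _ fun j => mul_nonneg (hQ _).le (pow_nonneg (hx.2 j) _)).trans ?_
  simp_rw [ENNReal.ofReal_mul (hQ _).le, ENNReal.ofReal_pow (hx.2 _)]
  exact le_rfl

end FixedPoint

/-! ### The scalar equation `e = g e^d + δ` -/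

/-- On `[0, ε]`, with `ε` a good-set witness, `e ↦ e - g e^d` is strictly increasing. -/
lemma strict_of_witness {d : ℕ} {g δ ε : ℝ} (hg : 0 < g) (hδ : 0 < δ) (hε : 0 < ε)
    (h : 2 * d * g * ε ^ (d - 1) + 2 * d * δ * ε ^ d < 1) {a b : ℝ} (ha : 0 ≤ a)
    (hab : a < b) (hb : b ≤ ε) : g * b ^ d - g * a ^ d < b - a := by
  have hb0 : 0 < b := ha.trans_lt hab
  have h1 : b ^ d - a ^ d ≤ (b - a) * d * ε ^ (d - 1) := by
    have := abs_pow_sub_pow_le b a d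
    rw [abs_of_pos (sub_pos.2 hab), abs_of_pos hb0, abs_of_nonneg ha, max_eq_left hab.le] at this
    refine (le_abs_self _).trans (this.trans ?_)
    have := sub_pos.2 hab
    gcongr
  have h2 : 0 ≤ d * g * ε ^ (d - 1) := by positivity
  have h3 : 0 ≤ 2 * d * δ * ε ^ d := by positivity
  have h4 : d * g * ε ^ (d - 1) < 1 := by linarith
  calc g * b ^ d - g * a ^ d = g * (b ^ d - a ^ d) := by ring
    _ ≤ g * ((b - a) * d * ε ^ (d - 1)) := by gcongr
    _ = (b - a) * (d * g * ε ^ (d - 1)) := by ring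
    _ < (b - a) * 1 := mul_lt_mul_of_pos_left h4 (sub_pos.2 hab)
    _ = b - a := mul_one _

lemma exists_root {d : ℕ} (hd : d ≠ 0) {g δ ε : ℝ} (hδ : 0 < δ) (hε : 0 < ε)
    (h : δ + g * ε ^ d ≤ ε) : ∃ e, 0 < e ∧ e ≤ ε ∧ g * e ^ d + δ = e := by
  have hc : ContinuousOn (fun e : ℝ => e - g * e ^ d) (Set.Icc 0 ε) := by fun_prop
  have hm : δ ∈ Set.Icc ((0 : ℝ) - g * 0 ^ d) (ε - g * ε ^ d) := by
    constructor
    · simp [hd, hδ.le]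
    · linarith
  obtain ⟨e, ⟨he0, he1⟩, he⟩ := intermediate_value_Icc hε.le hc hm
  simp only at he
  refine ⟨e, lt_of_le_of_ne he0 ?_, he1, by linarith⟩
  rintro rfl
  simp [hd] at he
  exact hδ.ne he

/-! ### Localization bounds -/

/-- second part of Theorem 2.3: localization bounds for the fixed point.
If `(γ, δ) ∈ G_d`, the equation `ε = γε^d + δ` has a smallest positive solution `ε*`,
it satisfies `γ (ε*)^{d−1} < 1`, and the unique fixed point `x` of `T` in the ε-ball for a
good-set witness `ε` satisfies
`(δ(1−δ(ε*)^d)/(1+γ(ε*)^{d−1}))^{d+1} ≤ ‖x‖_{d+1}^{d+1} ≤ (δ(1+δ(ε*)^d)/(1−γ(ε*)^{d−1}))^{d+1}`. -/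
theorem stmt6 (k d : ℕ) (hk : 1 ≤ k) (hd : 2 ≤ d)
    (Q : ZkL k → ℝ) (hQpos : ∀ j, 0 < Q j) (hQ0 : Q 0 = 1)
    (hsum1 : Summable fun j : ZkL k => |Q j| ^ (((d : ℝ) + 1) / 2))
    (hsum2 : Summable fun j : ZkP k => |Q j.1| ^ ((d : ℝ) + 1))
    (hgood : (gam k d Q, del k d Q) ∈ goodSet d) :
    ∃ εs : ℝ, 0 < εs ∧ gam k d Q * εs ^ d + del k d Q = εs ∧
      (∀ ε' : ℝ, 0 < ε' → gam k d Q * ε' ^ d + del k d Q = ε' → εs ≤ ε') ∧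
      gam k d Q * εs ^ (d - 1) < 1 ∧
      ∀ ε : ℝ, 0 < ε →
        del k d Q + gam k d Q * ε ^ d ≤ ε →
        2 * d * gam k d Q * ε ^ (d - 1) + 2 * d * del k d Q * ε ^ d < 1 →
        ∀ x : ZkP k → ℝ, memD k d x → norm0 k ((d : ℝ) + 1) x ≤ ε →
          (∀ i : ZkP k, opT k d Q x i.1 = x i) →
          (del k d Q * (1 - del k d Q * εs ^ d) / (1 + gam k d Q * εs ^ (d - 1))) ^ (d + 1)
              ≤ norm0 k ((d : ℝ) + 1) x ^ (d + 1) ∧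
            norm0 k ((d : ℝ) + 1) x ^ (d + 1) ≤
              (del k d Q * (1 + del k d Q * εs ^ d) /
                (1 - gam k d Q * εs ^ (d - 1))) ^ (d + 1) := by
  obtain ⟨hg1, hδ, ε₀, hε₀, hw₀, hw₀'⟩ := hgood
  simp only at hg1 hδ hw₀ hw₀'
  have hx1 := fun x => norm0_le_of_fixed (k := k) (d := d) (Q := Q) (x := x) (by omega) hQpos
    hsum1 hsum2
  have hx2 := fun x => del_le_of_fixed (k := k) (d := d) (Q := Q) (x := x) hQpos hsum2
  have hxn := fun x => norm0_nonneg (k := k) (x := x) (p := (d : ℝ) + 1)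
  generalize gam k d Q = g at *
  generalize del k d Q = δ at *
  have hg : 0 < g := by linarith
  obtain ⟨es, hes, hesε, heq⟩ := exists_root (by omega : d ≠ 0) hδ hε₀ hw₀
  have hmin : ∀ e : ℝ, 0 < e → g * e ^ d + δ = e → es ≤ e := by
    intro e he hee
    by_contra! hlt
    have := strict_of_witness hg hδ hε₀ hw₀' he.le hlt hesε
    linarith
  have hpow : es ^ d = es ^ (d - 1) * es := by
    rw [← pow_succ, Nat.sub_add_cancel (by omega)]
  have hlt : g * es ^ (d - 1) < 1 := by
    have : (g * es ^ (d - 1)) * es < 1 * es := by rw [mul_assoc, ← hpow]; linarith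
    exact lt_of_mul_lt_mul_right this hes.le
  refine ⟨es, hes, heq, hmin, hlt, ?_⟩
  intro ε hε hw hw' x hx hxε hfix
  have hx1 := hx1 x hx hfix
  have hx2 := hx2 x hx hfix
  have hxn := hxn x
  generalize norm0 k ((d : ℝ) + 1) x = X at *
  have hesε' : es ≤ ε := by
    obtain ⟨e, he, heε, hee⟩ := exists_root (by omega : d ≠ 0) hδ hε hw
    exact (hmin e he hee).trans heε
  have hXes : X ≤ es := by
    by_contra! hXlt
    have := strict_of_witness hg hδ hε hw' hes.le hXlt hxε
    linarith
  have hδes : δ * es ^ d < 1 := by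
    have h1 : δ * es ^ d ≤ δ * ε ^ d := by gcongr
    have h2 : 0 ≤ 2 * d * g * ε ^ (d - 1) := by positivity
    have h3 : 0 ≤ δ * ε ^ d := by positivity
    have h4 : (2 : ℝ) ≤ d := by exact_mod_cast hd
    nlinarith
  have hgpos : 0 < g * es ^ (d - 1) := by positivity
  have hδpos : 0 < δ * es ^ d := by positivity
  constructor
  · have hXpow : δ * X ^ d ≤ δ * es ^ d := by gcongr
    have hlow : δ ≤ (1 + δ * es ^ d) * X := hx2.trans (by gcongr)
    have h1 : 0 ≤ δ * (1 - δ * es ^ d) := mul_nonneg hδ.le (by linarith)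
    -- `(1 - u) (1 + u) ≤ 1` turns `δ / (1 + u)` into the lower bound `δ (1 - u)`.
    have h2 : δ * (1 - δ * es ^ d) ≤ X := by
      have := mul_le_mul_of_nonneg_right hlow (by linarith : 0 ≤ 1 - δ * es ^ d)
      nlinarith [mul_nonneg hxn (sq_nonneg (δ * es ^ d))]
    refine pow_le_pow_left₀ (div_nonneg h1 (by linarith)) ?_ _
    exact (div_le_self h1 (by linarith)).trans h2
  · refine pow_le_pow_left₀ hxn (hXes.trans ?_) _
    rw [le_div_iff₀ (by linarith)]
    have h1 : es * (1 - g * es ^ (d - 1)) = δ := by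
      rw [hpow] at heq
      linarith
    rw [h1]
    exact le_mul_of_one_le_right hδ.le (by linarith)
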